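/- arXiv:1006.2215 — 3 statements merged into one kernel-verified Lean document; each statement's English description precedes it below -/
import Mathlib

section
/- Let α be a finite nonempty type, let A ⊆ α be a nonempty subset, and let p be a probability mass function on α. Then the infimum, over all probability mass functions q on α whose support is contained in A, of the total variation distance TV(p, q) is attained and equals p(α \ A), the total probability that p assigns to the complement of A. (Applied with A the diagonal of S×S this says a protocol is ε-correct iff Pr[S_A ≠ S_B] ≤ ε; applied with A = S it says a protocol is ε-robust iff Pr[S_A = ⊥] ≤ ε.) -/
/-!
If `p` and `q` have the same total mass then `(1/2)·∑ₓ |p x − q x| = ∑ₓ (p x − q x)⁺`, so the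
distance is at least `p(s) − q(s)` for every event `s`, with equality as soon as `q ≤ p` on `s` and
`p ≤ q` off `s`. For `q` supported in `A`, the event `s = Aᶜ` gives the lower bound `p(Aᶜ)`; it is
attained by moving all the mass of `p` outside `A` to a single point of `A`.
-/

section TotalVariation

variable {α : Type*} {p q : α → ℝ} {m : ℝ} {s : Set α}

/-- The total variation distance of two summable families of real weights, as half of their
`ℓ¹` distance. -/
noncomputable def tvDist (p q : α → ℝ) : ℝ :=
  (1 / 2) * ∑' x, |p x - q x|

theorem tvDist_eq_tsum_posPart (hp : HasSum p m) (hq : HasSum q m) :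
    tvDist p q = ∑' x, (p x - q x)⁺ := by
  have hsub : HasSum (fun x => p x - q x) 0 := by simpa using hp.sub hq
  have habs : ∑' x, |p x - q x| = 2 * ∑' x, (p x - q x)⁺ :=
    calc ∑' x, |p x - q x| = ∑' x, (|p x - q x| + (p x - q x)) := by
          rw [hsub.summable.abs.tsum_add hsub.summable, hsub.tsum_eq, add_zero]
      _ = 2 * ∑' x, (p x - q x)⁺ := by
          simp only [abs_add_eq_two_nsmul_posPart, nsmul_eq_mul, Nat.cast_ofNat, tsum_mul_left]
  rw [tvDist, habs, one_div, inv_mul_cancel_left₀ two_ne_zero]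

theorem tsum_subtype_sub_le_tvDist (hp : HasSum p m) (hq : HasSum q m) (s : Set α) :
    ∑' x : s, (p x - q x) ≤ tvDist p q := by
  have hsub : Summable fun x => p x - q x := hp.summable.sub hq.summable
  have hpos : Summable fun x => (p x - q x)⁺ :=
    hsub.abs.of_nonneg_of_le (fun _ => posPart_nonneg _) fun _ =>
      sup_le (le_abs_self _) (abs_nonneg _)
  calc ∑' x : s, (p x - q x) ≤ ∑' x : s, (p x - q x)⁺ :=
        (hsub.subtype s).tsum_le_tsum (fun _ => le_posPart _) (hpos.subtype s)
    _ ≤ ∑' x, (p x - q x)⁺ := hpos.tsum_subtype_le _ s fun _ => posPart_nonneg _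
    _ = tvDist p q := (tvDist_eq_tsum_posPart hp hq).symm

theorem tvDist_eq_tsum_subtype_sub (hp : HasSum p m) (hq : HasSum q m)
    (hle : ∀ x ∈ s, q x ≤ p x) (hge : ∀ x ∉ s, p x ≤ q x) :
    tvDist p q = ∑' x : s, (p x - q x) := by
  rw [tvDist_eq_tsum_posPart hp hq, tsum_subtype s fun x => p x - q x]
  refine tsum_congr fun x => ?_
  by_cases hx : x ∈ s
  · rw [Set.indicator_of_mem hx, posPart_of_nonneg (sub_nonneg.2 (hle x hx))]
  · rw [Set.indicator_of_notMem hx, posPart_of_nonpos (sub_nonpos.2 (hge x hx))]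

end TotalVariation

section CollapseTo

variable {α : Type*} {A : Set α} {a x : α} {p : α → ℝ} {m : ℝ}

open Classical in
/-- The weights obtained from `p` by moving all the mass outside `A` to the point `a`, which is
meant to lie in `A`. -/
noncomputable def collapseTo (A : Set α) (a : α) (p : α → ℝ) : α → ℝ :=
  A.indicator p + Pi.single a (∑' x : ↥Aᶜ, p x)

theorem indicator_le_collapseTo (hp : ∀ x, 0 ≤ p x) : A.indicator p ≤ collapseTo A a p := by
  classical
  exact le_add_of_nonneg_right (Pi.single_nonneg.2 (tsum_nonneg fun x => hp x))

theorem collapseTo_nonneg (hp : ∀ x, 0 ≤ p x) (x : α) : 0 ≤ collapseTo A a p x :=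
  (Set.indicator_nonneg (fun x _ => hp x) x).trans (indicator_le_collapseTo hp x)

theorem le_collapseTo_of_mem (hp : ∀ x, 0 ≤ p x) (hx : x ∈ A) : p x ≤ collapseTo A a p x := by
  simpa only [Set.indicator_of_mem hx] using indicator_le_collapseTo (A := A) (a := a) hp x

theorem collapseTo_of_notMem (ha : a ∈ A) (hx : x ∉ A) : collapseTo A a p x = 0 := by
  have hxa : x ≠ a := fun h => hx (h ▸ ha)
  simp [collapseTo, hx, hxa]

theorem hasSum_collapseTo (hp : HasSum p m) : HasSum (collapseTo A a p) m := by
  classical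
  have hA : HasSum (A.indicator p) (∑' x : A, p x) :=
    hasSum_subtype_iff_indicator.1 (hp.summable.subtype A).hasSum
  rw [← hp.tsum_eq, ← hp.summable.tsum_subtype_add_tsum_subtype_compl A]
  exact hA.add (hasSum_pi_single a _)

end CollapseTo

theorem stmt_0_general {α : Type*} {A : Set α} (hA : A.Nonempty) {p : α → ℝ} {m : ℝ}
    (hp0 : ∀ x, 0 ≤ p x) (hp : HasSum p m) :
    IsLeast {t : ℝ | ∃ q : α → ℝ, (∀ x, 0 ≤ q x) ∧ HasSum q m ∧
        (∀ x ∉ A, q x = 0) ∧ t = tvDist p q}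
      (∑' x : ↥Aᶜ, p x) := by
  have tsum_compl_sub {q : α → ℝ} (hqA : ∀ x ∉ A, q x = 0) :
      ∑' x : ↥Aᶜ, (p x - q x) = ∑' x : ↥Aᶜ, p x :=
    tsum_congr fun x => by rw [hqA x x.2, sub_zero]
  constructor
  · obtain ⟨a, ha⟩ := hA
    have hq0 : ∀ x ∉ A, collapseTo A a p x = 0 := fun _ => collapseTo_of_notMem ha
    have hq : HasSum (collapseTo A a p) m := hasSum_collapseTo hp
    refine ⟨collapseTo A a p, collapseTo_nonneg hp0, hq, hq0, ?_⟩
    rw [← tsum_compl_sub hq0, tvDist_eq_tsum_subtype_sub hp hq]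
    · exact fun x hx => (hq0 x hx).trans_le (hp0 x)
    · exact fun x hx => le_collapseTo_of_mem hp0 (Set.notMem_compl_iff.1 hx)
  · rintro _ ⟨q, -, hq, hqA, rfl⟩
    exact (tsum_compl_sub hqA).symm.trans_le (tsum_subtype_sub_le_tvDist hp hq Aᶜ)

/-- For a pmf `p` on a finite nonempty type `α` and a nonempty subset
`A ⊆ α`, the infimum over all pmfs `q` supported in `A` of the total variation distance
`TV(p,q) = (1/2)·∑ₓ |p x − q x|` is attained and equals `p(α \ A) = ∑_{x ∉ A} p x`. -/
theorem stmt_0 {α : Type*} [Fintype α] [Nonempty α] [DecidableEq α]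
    (A : Finset α) (hA : A.Nonempty)
    (p : α → ℝ) (hp0 : ∀ x, 0 ≤ p x) (hp1 : ∑ x, p x = 1) :
    IsLeast {t : ℝ | ∃ q : α → ℝ, (∀ x, 0 ≤ q x) ∧ (∑ x, q x = 1) ∧
        (∀ x ∉ A, q x = 0) ∧ t = (1 / 2) * ∑ x, |p x - q x|}
      (∑ x ∈ Aᶜ, p x) := by
  have hasSum_one_iff (q : α → ℝ) : HasSum q 1 ↔ ∑ x, q x = 1 :=
    ⟨(hasSum_fintype q).unique, fun h => h ▸ hasSum_fintype q⟩
  have tsum_compl : ∑' x : ↥(A : Set α)ᶜ, p x = ∑ x ∈ Aᶜ, p x := by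
    rw [← Finset.coe_compl, Finset.tsum_subtype']
  simpa only [tvDist, tsum_compl, tsum_fintype (β := α), hasSum_one_iff, Finset.mem_coe] using
    stmt_0_general (A := (A : Set α)) hA hp0 ((hasSum_one_iff p).2 hp1)
end

section
/- Let n ≥ 1, let 𝒵 be a finite nonempty type, and let P be a probability mass function on {0,1}^n × 𝒵 with marginals P_X on {0,1}^n and P_Z on 𝒵. Suppose there exists a probability mass function Q on 𝒵 and a real 0 ≤ ε ≤ 1/2 such that (1/2)·∑_{x,z} |P(x,z) − 2^{−n}·Q(z)| ≤ ε. Then the mutual information I(X;Z) := ∑_{x,z : P(x,z) > 0} P(x,z)·log₂( P(x,z) / (P_X(x)·P_Z(z)) ) satisfies I(X;Z) ≤ 2nε + 4h(ε), where h(ε) := −ε·log₂ ε − (1−ε)·log₂(1−ε) is the binary entropy (with h(0) := 0). (This is the Fano-type bound showing that ε-closeness of a key–adversary joint distribution to an ideal product of the uniform key with an independent adversary distribution forces the adversary's information about the key to be small.) -/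
/-!
Mutual information is the relative entropy `D(P ‖ P_X ⊗ P_Z)`, and replacing `P_X` by any other
distribution `R` of `X` can only increase it. If `R` is bounded below by `1/u`, then
`P ≤ u • (R ⊗ P_Z)`, and a relative entropy whose likelihood ratio is at most `u` is at most
`δ (log u + 1)`, where `δ` is the total variation distance. Passing to marginals does not increase
this distance, so the triangle inequality through `R ⊗ Q` gives `δ ≤ 2ε`. Finally
`2ε ≤ 4h(ε)` when `ε ≤ 1/2`, while for `ε ≥ 1/2` the trivial bound `log u` suffices.
-/

section RelativeEntropy

variable {α : Type*} [Fintype α] {P R : α → ℝ} {u : ℝ}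

/-- The relative entropy (Kullback–Leibler divergence) of finite distributions, in nats. A point
where `R` vanishes contributes `0` instead of `∞`, so `P` should be supported where `R` is. -/
noncomputable def relEntropy (P R : α → ℝ) : ℝ :=
  ∑ x, P x * Real.log (P x / R x)

/-- The total variation distance of finite distributions, normalized to take values in `[0, 1]`. -/
noncomputable def totalVariation (P R : α → ℝ) : ℝ :=
  (1 / 2) * ∑ x, |P x - R x|

theorem totalVariation_nonneg (P R : α → ℝ) : 0 ≤ totalVariation P R := by
  unfold totalVariation
  positivity

theorem totalVariation_comm (P R : α → ℝ) : totalVariation P R = totalVariation R P := by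
  simp only [totalVariation, abs_sub_comm]

theorem totalVariation_triangle (P Q R : α → ℝ) :
    totalVariation P R ≤ totalVariation P Q + totalVariation Q R := by
  simp only [totalVariation, ← mul_add, ← Finset.sum_add_distrib]
  gcongr
  exact abs_sub_le _ _ _

theorem sum_posPart_sub_eq_totalVariation (hsum : ∑ x, P x = ∑ x, R x) :
    ∑ x, (P x - R x)⁺ = totalVariation P R := by
  have posPart_eq (a : ℝ) : a⁺ = (1 / 2) * (|a| + a) := by
    linarith [posPart_add_negPart a, posPart_sub_negPart a]
  simp only [posPart_eq, totalVariation, ← Finset.mul_sum, Finset.sum_add_distrib,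
    Finset.sum_sub_distrib, hsum, sub_self, add_zero]

theorem sub_le_mul_log_div {p r : ℝ} (hp : 0 ≤ p) (hr : 0 ≤ r) (hpr : r = 0 → p = 0) :
    p - r ≤ p * Real.log (p / r) := by
  rcases hp.eq_or_lt with rfl | hp
  · simpa using hr
  have hr : 0 < r := hr.lt_of_ne' fun h => hp.ne' (hpr h)
  calc p - r = p * (1 - (p / r)⁻¹) := by field_simp
    _ ≤ p * Real.log (p / r) := by
      gcongr
      exact Real.one_sub_inv_le_log_of_pos (by positivity)

theorem relEntropy_nonneg (hP : ∀ x, 0 ≤ P x) (hR : ∀ x, 0 ≤ R x)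
    (hPR : ∀ x, R x = 0 → P x = 0) (hsum : ∑ x, R x ≤ ∑ x, P x) : 0 ≤ relEntropy P R :=
  calc 0 ≤ ∑ x, (P x - R x) := by rw [Finset.sum_sub_distrib]; exact sub_nonneg.2 hsum
    _ ≤ relEntropy P R :=
      Finset.sum_le_sum fun x _ => sub_le_mul_log_div (hP x) (hR x) (hPR x)

theorem mul_log_div_le_mul_log {p r : ℝ} (hp : 0 ≤ p) (hr : 0 ≤ r) (hpr : p ≤ u * r) :
    p * Real.log (p / r) ≤ p * Real.log u := by
  rcases hp.eq_or_lt with rfl | hp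
  · simp
  have hr : 0 < r := hr.lt_of_ne' (right_ne_zero_of_mul (hp.trans_le hpr).ne')
  gcongr
  exact (div_le_iff₀ hr).2 hpr

theorem relEntropy_le_log (hP : ∀ x, 0 ≤ P x) (hP1 : ∑ x, P x = 1) (hR : ∀ x, 0 ≤ R x)
    (hPR : ∀ x, P x ≤ u * R x) : relEntropy P R ≤ Real.log u :=
  calc relEntropy P R ≤ ∑ x, P x * Real.log u :=
      Finset.sum_le_sum fun x _ => mul_log_div_le_mul_log (hP x) (hR x) (hPR x)
    _ = Real.log u := by rw [← Finset.sum_mul, hP1, one_mul]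

theorem mul_log_div_le_posPart_mul {p r : ℝ} (hp : 0 ≤ p) (hr : 0 ≤ r) (hpr : p ≤ u * r) :
    p * Real.log (p / r) ≤ (p - r)⁺ * (Real.log u + 1) := by
  rcases le_or_gt p r with hle | hlt
  · rw [posPart_eq_zero.2 (sub_nonpos.2 hle), zero_mul]
    exact mul_nonpos_of_nonneg_of_nonpos hp
      (Real.log_nonpos (by positivity) (div_le_one_of_le₀ hle hr))
  have hp : 0 < p := hr.trans_lt hlt
  have hr : 0 < r := hr.lt_of_ne' (right_ne_zero_of_mul (hp.trans_le hpr).ne')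
  have excess : (p - r) * Real.log (p / r) ≤ (p - r) * Real.log u := by
    have : 0 ≤ p - r := sub_nonneg.2 hlt.le
    gcongr
    exact (div_le_iff₀ hr).2 hpr
  have overlap : r * Real.log (p / r) ≤ p - r :=
    calc r * Real.log (p / r) ≤ r * (p / r - 1) := by
          gcongr
          exact Real.log_le_sub_one_of_pos (by positivity)
      _ = p - r := by field_simp
  rw [posPart_eq_self.2 (sub_nonneg.2 hlt.le)]
  linarith

theorem relEntropy_le_totalVariation_mul (hP : ∀ x, 0 ≤ P x) (hR : ∀ x, 0 ≤ R x)
    (hsum : ∑ x, P x = ∑ x, R x) (hPR : ∀ x, P x ≤ u * R x) :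
    relEntropy P R ≤ totalVariation P R * (Real.log u + 1) :=
  calc relEntropy P R ≤ ∑ x, (P x - R x)⁺ * (Real.log u + 1) :=
      Finset.sum_le_sum fun x _ => mul_log_div_le_posPart_mul (hP x) (hR x) (hPR x)
    _ = totalVariation P R * (Real.log u + 1) := by
      rw [← Finset.sum_mul, sum_posPart_sub_eq_totalVariation hsum]

end RelativeEntropy

theorem le_two_mul_binEntropy {ε : ℝ} (hε0 : 0 ≤ ε) (hε : ε ≤ 1 / 2) :
    ε ≤ 2 * Real.binEntropy ε := by
  rcases hε0.eq_or_lt with rfl | hpos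
  · simp
  have log_inv_ge : 1 / 2 ≤ Real.log ε⁻¹ := by
    linarith [Real.one_sub_inv_le_log_of_pos (inv_pos.2 hpos), inv_inv ε]
  have log_inv_one_sub_nonneg : 0 ≤ Real.log (1 - ε)⁻¹ :=
    Real.log_nonneg ((one_le_inv₀ (by linarith)).2 (by linarith))
  calc ε = 2 * (ε * (1 / 2) + (1 - ε) * 0) := by ring
    _ ≤ 2 * (ε * Real.log ε⁻¹ + (1 - ε) * Real.log (1 - ε)⁻¹) := by
      have : 0 ≤ 1 - ε := by linarith
      gcongr

theorem binEntropy_div_log_two (ε : ℝ) :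
    Real.binEntropy ε / Real.log 2
      = -(ε * Real.logb 2 ε) - (1 - ε) * Real.logb 2 (1 - ε) := by
  simp only [Real.binEntropy, Real.logb, Real.log_inv]
  ring

section MutualInformation

variable {α β : Type*} {P : α × β → ℝ} {R : α → ℝ} {Q : β → ℝ} {u ε : ℝ}

/-- The marginal of a joint distribution on its first factor. -/
def marginalFst [Fintype β] (P : α × β → ℝ) (x : α) : ℝ :=
  ∑ z, P (x, z)

/-- The marginal of a joint distribution on its second factor. -/
def marginalSnd [Fintype α] (P : α × β → ℝ) (z : β) : ℝ :=
  ∑ x, P (x, z)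

/-- The product distribution `R ⊗ Q`, under which the two factors are independent. -/
def prodDist (R : α → ℝ) (Q : β → ℝ) (x : α × β) : ℝ :=
  R x.1 * Q x.2

/-- The mutual information of the two factors of a joint distribution, in nats. -/
noncomputable def mutualInfo [Fintype α] [Fintype β] (P : α × β → ℝ) : ℝ :=
  relEntropy P (prodDist (marginalFst P) (marginalSnd P))

theorem marginalFst_nonneg [Fintype β] (hP : ∀ x, 0 ≤ P x) (x : α) : 0 ≤ marginalFst P x :=
  Finset.sum_nonneg fun _ _ => hP _

theorem marginalSnd_nonneg [Fintype α] (hP : ∀ x, 0 ≤ P x) (z : β) : 0 ≤ marginalSnd P z :=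
  Finset.sum_nonneg fun _ _ => hP _

theorem le_marginalFst [Fintype β] (hP : ∀ x, 0 ≤ P x) (x : α × β) : P x ≤ marginalFst P x.1 :=
  Finset.single_le_sum (f := fun z => P (x.1, z)) (fun _ _ => hP _) (Finset.mem_univ x.2)

theorem le_marginalSnd [Fintype α] (hP : ∀ x, 0 ≤ P x) (x : α × β) : P x ≤ marginalSnd P x.2 :=
  Finset.single_le_sum (f := fun w => P (w, x.2)) (fun _ _ => hP _) (Finset.mem_univ x.1)

theorem prodDist_nonneg (hR : ∀ x, 0 ≤ R x) (hQ : ∀ z, 0 ≤ Q z) (x : α × β) :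
    0 ≤ prodDist R Q x :=
  mul_nonneg (hR _) (hQ _)

theorem le_mul_prodDist_marginalSnd [Fintype α] (hP : ∀ x, 0 ≤ P x) (hu : 0 < u)
    (hRu : ∀ x, u⁻¹ ≤ R x) (x : α × β) : P x ≤ u * prodDist R (marginalSnd P) x :=
  calc P x ≤ 1 * marginalSnd P x.2 := by rw [one_mul]; exact le_marginalSnd hP x
    _ ≤ (u * R x.1) * marginalSnd P x.2 := by
      gcongr
      · exact marginalSnd_nonneg hP _
      · exact (inv_le_iff_one_le_mul₀' hu).1 (hRu _)
    _ = u * prodDist R (marginalSnd P) x := mul_assoc _ _ _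

theorem marginalSnd_prodDist [Fintype α] (hR : ∑ x, R x = 1) :
    marginalSnd (prodDist R Q) = Q := by
  ext z
  simp only [marginalSnd, prodDist, ← Finset.sum_mul, hR, one_mul]

variable [Fintype α] [Fintype β]

theorem sum_marginalFst (P : α × β → ℝ) : ∑ x, marginalFst P x = ∑ x, P x :=
  (Fintype.sum_prod_type P).symm

theorem sum_marginalSnd (P : α × β → ℝ) : ∑ z, marginalSnd P z = ∑ x, P x :=
  (Fintype.sum_prod_type_right P).symm

theorem sum_prodDist (R : α → ℝ) (Q : β → ℝ) :
    ∑ x, prodDist R Q x = (∑ x, R x) * ∑ z, Q z := by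
  simp only [prodDist, Fintype.sum_prod_type, Finset.sum_mul_sum]

theorem totalVariation_prodDist_left (hR : ∀ x, 0 ≤ R x) (hR1 : ∑ x, R x = 1) (Q Q' : β → ℝ) :
    totalVariation (prodDist R Q) (prodDist R Q') = totalVariation Q Q' := by
  simp only [totalVariation, prodDist, ← mul_sub, abs_mul, abs_of_nonneg (hR _),
    Fintype.sum_prod_type, ← Finset.mul_sum, ← Finset.sum_mul, hR1, one_mul]

theorem totalVariation_marginalSnd_le (P P' : α × β → ℝ) :
    totalVariation (marginalSnd P) (marginalSnd P') ≤ totalVariation P P' := by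
  simp only [totalVariation, marginalSnd, ← Finset.sum_sub_distrib, Fintype.sum_prod_type_right]
  gcongr
  exact Finset.abs_sum_le_sum_abs _ _

theorem totalVariation_prodDist_marginalSnd_le (hR : ∀ x, 0 ≤ R x) (hR1 : ∑ x, R x = 1)
    (P : α × β → ℝ) (Q : β → ℝ) :
    totalVariation P (prodDist R (marginalSnd P)) ≤ 2 * totalVariation P (prodDist R Q) := by
  have marginal_close : totalVariation Q (marginalSnd P) ≤ totalVariation P (prodDist R Q) := by
    simpa only [marginalSnd_prodDist hR1, totalVariation_comm Q] using
      totalVariation_marginalSnd_le P (prodDist R Q)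
  linarith [totalVariation_triangle P (prodDist R Q) (prodDist R (marginalSnd P)),
    totalVariation_prodDist_left hR hR1 Q (marginalSnd P)]

theorem relEntropy_prodDist_marginalSnd (hP : ∀ x, 0 ≤ P x)
    (hPR : ∀ x, R x = 0 → marginalFst P x = 0) :
    relEntropy P (prodDist R (marginalSnd P)) = mutualInfo P + relEntropy (marginalFst P) R := by
  have marginal_term : relEntropy (marginalFst P) R
      = ∑ x : α × β, P x * Real.log (marginalFst P x.1 / R x.1) := by
    simp only [relEntropy, Fintype.sum_prod_type, ← Finset.sum_mul]
    rfl
  rw [marginal_term, mutualInfo, relEntropy, relEntropy, ← Finset.sum_add_distrib]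
  refine Finset.sum_congr rfl fun x _ => ?_
  rcases (hP x).eq_or_lt with hx | hx
  · simp [← hx]
  have hfst : marginalFst P x.1 ≠ 0 := (hx.trans_le (le_marginalFst hP x)).ne'
  have hsnd : marginalSnd P x.2 ≠ 0 := (hx.trans_le (le_marginalSnd hP x)).ne'
  have hRx : R x.1 ≠ 0 := fun h => hfst (hPR _ h)
  simp only [prodDist]
  rw [← mul_add, ← Real.log_mul (by positivity) (by positivity)]
  congr 2
  field_simp

theorem mutualInfo_le_relEntropy (hP : ∀ x, 0 ≤ P x) (hR : ∀ x, 0 ≤ R x)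
    (hPR : ∀ x, R x = 0 → marginalFst P x = 0) (hsum : ∑ x, R x ≤ ∑ x, P x) :
    mutualInfo P ≤ relEntropy P (prodDist R (marginalSnd P)) := by
  rw [relEntropy_prodDist_marginalSnd hP hPR]
  exact le_add_of_nonneg_right <|
    relEntropy_nonneg (marginalFst_nonneg hP) hR hPR (hsum.trans_eq (sum_marginalFst P).symm)

theorem mutualInfo_le_of_totalVariation_le (hP : ∀ x, 0 ≤ P x) (hP1 : ∑ x, P x = 1)
    (hu : 0 < u) (hRu : ∀ x, u⁻¹ ≤ R x) (hR1 : ∑ x, R x = 1) (hε : ε ≤ 1)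
    (hclose : totalVariation P (prodDist R Q) ≤ ε) :
    mutualInfo P ≤ 2 * Real.log u * ε + 4 * Real.binEntropy ε := by
  have hRpos (x : α) : 0 < R x := (inv_pos.2 hu).trans_le (hRu x)
  have hR (x : α) : 0 ≤ R x := (hRpos x).le
  have hS := prodDist_nonneg hR (marginalSnd_nonneg hP)
  have hPS := le_mul_prodDist_marginalSnd hP hu hRu
  have hsum : ∑ x, P x = ∑ x, prodDist R (marginalSnd P) x := by
    rw [sum_prodDist, sum_marginalSnd, hR1, one_mul]
  have info_le := mutualInfo_le_relEntropy hP hR (fun x h => absurd h (hRpos x).ne')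
    (hR1.trans hP1.symm).le
  have le_log := relEntropy_le_log hP hP1 hS hPS
  have log_nonneg : 0 ≤ Real.log u := le_log.trans' <|
    relEntropy_nonneg hP hS (fun x h => (hP x).antisymm' (by simpa [h] using hPS x)) hsum.ge
  have hε0 : 0 ≤ ε := (totalVariation_nonneg _ _).trans hclose
  rcases le_total ε (1 / 2) with hsmall | hlarge
  · calc mutualInfo P
        ≤ totalVariation P (prodDist R (marginalSnd P)) * (Real.log u + 1) :=
          info_le.trans (relEntropy_le_totalVariation_mul hP hS hsum hPS)
      _ ≤ (2 * ε) * (Real.log u + 1) := by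
          gcongr
          linarith [totalVariation_prodDist_marginalSnd_le hR hR1 P Q]
      _ ≤ 2 * Real.log u * ε + 4 * Real.binEntropy ε := by
          linarith [le_two_mul_binEntropy hε0 hsmall]
  · calc mutualInfo P ≤ Real.log u * 1 := by rw [mul_one]; exact info_le.trans le_log
      _ ≤ Real.log u * (2 * ε) := by gcongr; linarith
      _ ≤ 2 * Real.log u * ε + 4 * Real.binEntropy ε := by
          linarith [Real.binEntropy_nonneg hε0 hε]

theorem sum_filter_mul_logb_eq_mutualInfo_div [DecidablePred fun x => 0 < P x]
    (hP : ∀ x, 0 ≤ P x) :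
    (∑ x with 0 < P x, P x * Real.logb 2 (P x / ((∑ z, P (x.1, z)) * ∑ w, P (w, x.2))))
      = mutualInfo P / Real.log 2 := by
  rw [mutualInfo, relEntropy, Finset.sum_div, Finset.sum_filter_of_ne]
  · simp only [Real.logb, mul_div_assoc]
    rfl
  · exact fun x _ hx => (hP x).lt_of_ne' (left_ne_zero_of_mul hx)

end MutualInformation

open Classical in
/-- For the uniform distribution `R` on `{0,1}ⁿ`, one can take `u = 2ⁿ`. -/
theorem stmt_4_general {α β : Type*} [Fintype α] [Fintype β] (P : α × β → ℝ)
    (hP0 : ∀ x, 0 ≤ P x) (hP1 : ∑ x, P x = 1) (R : α → ℝ) (hR1 : ∑ x, R x = 1)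
    (u : ℝ) (hu : 0 < u) (hRu : ∀ x, u⁻¹ ≤ R x) (Q : β → ℝ) (ε : ℝ) (hε : ε ≤ 1)
    (hclose : (1 / 2) * ∑ x : α × β, |P x - R x.1 * Q x.2| ≤ ε) :
    (∑ x with 0 < P x, P x * Real.logb 2 (P x / ((∑ z, P (x.1, z)) * (∑ w, P (w, x.2)))))
      ≤ 2 * Real.logb 2 u * ε
        + 4 * (-(ε * Real.logb 2 ε) - (1 - ε) * Real.logb 2 (1 - ε)) := by
  rw [sum_filter_mul_logb_eq_mutualInfo_div hP0, ← binEntropy_div_log_two]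
  calc mutualInfo P / Real.log 2
      ≤ (2 * Real.log u * ε + 4 * Real.binEntropy ε) / Real.log 2 := by
        gcongr
        exact mutualInfo_le_of_totalVariation_le hP0 hP1 hu hRu hR1 hε hclose
    _ = 2 * Real.logb 2 u * ε + 4 * (Real.binEntropy ε / Real.log 2) := by
        rw [Real.logb]
        ring

open Classical in
/-- If the joint distribution `P` of an `n`-bit key `X` and an adversary
system `Z` is within total variation distance `ε ≤ 1/2` of the product of the uniform
distribution on `{0,1}ⁿ` with some distribution `Q` on `𝒵`, then the mutual information
`I(X;Z)` (in bits) is at most `2nε + 4h(ε)`, where `h` is the binary entropy. -/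
theorem stmt_4 (n : ℕ) (hn : 1 ≤ n) (𝒵 : Type*) [Fintype 𝒵] [Nonempty 𝒵]
    (P : ((Fin n → Bool) × 𝒵) → ℝ) (hP0 : ∀ x, 0 ≤ P x) (hP1 : ∑ x, P x = 1)
    (Q : 𝒵 → ℝ) (hQ0 : ∀ z, 0 ≤ Q z) (hQ1 : ∑ z, Q z = 1)
    (ε : ℝ) (hε0 : 0 ≤ ε) (hε2 : ε ≤ 1 / 2)
    (hclose : (1 / 2) * ∑ x : (Fin n → Bool) × 𝒵,
        |P x - ((2 : ℝ) ^ n)⁻¹ * Q x.2| ≤ ε) :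
    (∑ x ∈ Finset.univ.filter (fun x : (Fin n → Bool) × 𝒵 => 0 < P x),
        P x * Real.logb 2 (P x / ((∑ z, P (x.1, z)) * (∑ w, P (w, x.2)))))
      ≤ 2 * n * ε + 4 * (-(ε * Real.logb 2 ε) - (1 - ε) * Real.logb 2 (1 - ε)) := by
  simpa [Real.logb_pow] using stmt_4_general P hP0 hP1 (fun _ => ((2 : ℝ) ^ n)⁻¹) (by simp) (2 ^ n)
    (by positivity) (fun _ => le_rfl) Q ε (by linarith) hclose
end

section
/- Let γ, ρ, ν be strictly positive real numbers. Then for every ε > 0 there exist real numbers ℓ ≥ 0, n ≥ 1 and c > 0 such that, setting nᵢ := n + c·i and ℓᵢ := ℓ + c·ρ·i/2 for every integer i ≥ 0, the series ∑_{i=1}^{∞} ( exp(−γ·(ρ·nᵢ − ℓᵢ − ℓ)) + exp(−ν·ℓ_{i−1} + log nᵢ) ) is summable and its sum is at most ε. (This is the claim that, with the stated choice of round lengths, the total security parameter of the continuous key stream obtained by sequentially composing rounds of a QKD protocol can be made arbitrarily small.) -/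
/-!
The round insecurities are a geometric sequence and, once `exp (log nᵢ)` is simplified to `nᵢ`, a
geometric sequence with coefficients affine in the round index, so the series has a closed form.
In that form the first part carries a factor `exp (-γ * (ρ * n - 2 * ℓ))` and the second a factor
`exp (-ν * ℓ)` times a polynomial of degree one in `n`. Letting `n` grow linearly in `ℓ` with slope
greater than `2 / ρ` sends both to zero as `ℓ → ∞`.
-/

open Filter Topology

/-- The bound on the insecurity of round `j + 1`, run over an authentic channel, with
`nᵢ = n + c * i` signals and key lengths `ℓᵢ = ℓ + c * ρ * i / 2`. -/
noncomputable def keyInsecurity (γ ρ ℓ n c : ℝ) (j : ℕ) : ℝ :=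
  Real.exp (-γ * (ρ * (n + c * (j + 1)) - (ℓ + c * ρ * (j + 1) / 2) - ℓ))

/-- The bound on the imperfection of the authentication in round `j + 1`, which consumes the
`ℓ + c * ρ * j / 2` key bits produced by the previous round. -/
noncomputable def authInsecurity (ν ρ ℓ n c : ℝ) (j : ℕ) : ℝ :=
  Real.exp (-ν * (ℓ + c * ρ * j / 2) + Real.log (n + c * (j + 1)))

theorem exp_add_mul_natCast (a b : ℝ) (j : ℕ) :
    Real.exp (a + b * j) = Real.exp a * Real.exp b ^ j := by
  rw [Real.exp_add, mul_comm b, Real.exp_nat_mul]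

theorem hasSum_exp_add_mul_natCast (a : ℝ) {b : ℝ} (hb : b < 0) :
    HasSum (fun j : ℕ => Real.exp (a + b * j)) (Real.exp a * (1 - Real.exp b)⁻¹) := by
  simpa only [exp_add_mul_natCast] using
    (hasSum_geometric_of_lt_one (Real.exp_nonneg b) (Real.exp_lt_one_iff.mpr hb)).mul_left _

theorem hasSum_add_mul_coe_mul_geometric {𝕜 : Type*} [NormedDivisionRing 𝕜] (a b : 𝕜)
    {r : 𝕜} (hr : ‖r‖ < 1) :
    HasSum (fun j : ℕ => (a + b * j) * r ^ j) (a * (1 - r)⁻¹ + b * (r / (1 - r) ^ 2)) := by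
  simpa only [add_mul, mul_assoc] using
    ((hasSum_geometric_of_norm_lt_one hr).mul_left a).add
      ((hasSum_coe_mul_geometric_of_norm_lt_one hr).mul_left b)

theorem tendsto_add_mul_mul_exp_neg_mul_atTop_nhds_zero (a b : ℝ) {ν : ℝ} (hν : 0 < ν) :
    Tendsto (fun x : ℝ => (a + b * x) * Real.exp (-ν * x)) atTop (𝓝 0) := by
  have h_const := (tendsto_rpow_mul_exp_neg_mul_atTop_nhds_zero 0 ν hν).const_mul a
  have h_linear := (tendsto_rpow_mul_exp_neg_mul_atTop_nhds_zero 1 ν hν).const_mul b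
  simpa only [Real.rpow_zero, Real.rpow_one, one_mul, mul_zero, add_zero, add_mul, mul_assoc]
    using h_const.add h_linear

section

variable {γ ρ ν c : ℝ}

theorem hasSum_keyInsecurity (hγ : 0 < γ) (hρ : 0 < ρ) (hc : 0 < c) (ℓ n : ℝ) :
    HasSum (keyInsecurity γ ρ ℓ n c)
      (Real.exp (-(γ * (ρ * n - 2 * ℓ + c * ρ / 2))) *
        (1 - Real.exp (-(γ * (c * ρ / 2))))⁻¹) := by
  have h_slope : -(γ * (c * ρ / 2)) < 0 := neg_lt_zero.mpr (by positivity)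
  convert hasSum_exp_add_mul_natCast (-(γ * (ρ * n - 2 * ℓ + c * ρ / 2))) h_slope using 2 with j
  rw [keyInsecurity]
  ring_nf

theorem authInsecurity_eq {ℓ n : ℝ} (hc : 0 ≤ c) (hn : 0 < n + c) (j : ℕ) :
    authInsecurity ν ρ ℓ n c j =
      Real.exp (-ν * ℓ) * ((n + c + c * j) * Real.exp (-(ν * (c * ρ / 2))) ^ j) := by
  have h_signals : 0 < n + c * (j + 1) := by linarith [mul_nonneg hc j.cast_nonneg]
  have h_exp : Real.exp (-ν * (ℓ + c * ρ * j / 2)) =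
      Real.exp (-ν * ℓ) * Real.exp (-(ν * (c * ρ / 2))) ^ j := by
    rw [← exp_add_mul_natCast]
    ring_nf
  rw [authInsecurity, Real.exp_add, Real.exp_log h_signals, h_exp]
  ring

theorem hasSum_authInsecurity (hν : 0 < ν) (hρ : 0 < ρ) (hc : 0 < c) {n : ℝ} (hn : 0 < n + c)
    (ℓ : ℝ) :
    HasSum (authInsecurity ν ρ ℓ n c)
      (Real.exp (-ν * ℓ) * ((n + c) * (1 - Real.exp (-(ν * (c * ρ / 2))))⁻¹ +
        c * (Real.exp (-(ν * (c * ρ / 2))) / (1 - Real.exp (-(ν * (c * ρ / 2)))) ^ 2))) := by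
  have h_ratio : ‖Real.exp (-(ν * (c * ρ / 2)))‖ < 1 := by
    rw [Real.norm_of_nonneg (Real.exp_nonneg _)]
    exact Real.exp_lt_one_iff.mpr (neg_lt_zero.mpr (by positivity))
  rw [funext (authInsecurity_eq hc.le hn)]
  exact (hasSum_add_mul_coe_mul_geometric (n + c) c h_ratio).mul_left _

variable {ι : Type*} {F : Filter ι} {ℓ n : ι → ℝ}

theorem tendsto_tsum_keyInsecurity (hγ : 0 < γ) (hρ : 0 < ρ) (hc : 0 < c)
    (h_rate : Tendsto (fun x => ρ * n x - 2 * ℓ x) F atTop) :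
    Tendsto (fun x => ∑' j, keyInsecurity γ ρ (ℓ x) (n x) c j) F (𝓝 0) := by
  simp only [(hasSum_keyInsecurity hγ hρ hc _ _).tsum_eq]
  have h_exp : Tendsto (fun x => Real.exp (-(γ * (ρ * n x - 2 * ℓ x + c * ρ / 2)))) F (𝓝 0) :=
    Real.tendsto_exp_neg_atTop_nhds_zero.comp
      ((h_rate.atTop_add tendsto_const_nhds).const_mul_atTop hγ)
  simpa only [zero_mul] using h_exp.mul_const _

theorem tendsto_tsum_authInsecurity (hν : 0 < ν) (hρ : 0 < ρ) (hc : 0 < c)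
    (hn : ∀ᶠ x in F, 0 < n x + c) (hℓ : Tendsto ℓ F atTop)
    (h_signals : Tendsto (fun x => n x * Real.exp (-ν * ℓ x)) F (𝓝 0)) :
    Tendsto (fun x => ∑' j, authInsecurity ν ρ (ℓ x) (n x) c j) F (𝓝 0) := by
  have h_exp : Tendsto (fun x => Real.exp (-ν * ℓ x)) F (𝓝 0) :=
    Real.tendsto_exp_comp_nhds_zero.mpr (hℓ.const_mul_atTop_of_neg (neg_lt_zero.mpr hν))
  set r := Real.exp (-(ν * (c * ρ / 2))) with hr
  have h_closed : Tendsto (fun x => n x * Real.exp (-ν * ℓ x) * (1 - r)⁻¹ +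
      Real.exp (-ν * ℓ x) * (c * (1 - r)⁻¹ + c * (r / (1 - r) ^ 2))) F (𝓝 0) := by
    simpa only [zero_mul, add_zero] using (h_signals.mul_const _).add (h_exp.mul_const _)
  refine h_closed.congr' ?_
  filter_upwards [hn] with x hx
  rw [(hasSum_authInsecurity hν hρ hc hx (ℓ x)).tsum_eq, ← hr]
  ring

theorem summable_keyInsecurity_add_authInsecurity (hγ : 0 < γ) (hρ : 0 < ρ) (hν : 0 < ν)
    (hc : 0 < c) {n : ℝ} (hn : 0 < n + c) (ℓ : ℝ) :
    Summable fun j => keyInsecurity γ ρ ℓ n c j + authInsecurity ν ρ ℓ n c j :=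
  (hasSum_keyInsecurity hγ hρ hc ℓ n).summable.add (hasSum_authInsecurity hν hρ hc hn ℓ).summable

theorem tendsto_tsum_keyInsecurity_add_authInsecurity (hγ : 0 < γ) (hρ : 0 < ρ) (hν : 0 < ν)
    (hc : 0 < c) (a : ℝ) {b : ℝ} (hb : 2 / ρ < b) :
    Tendsto (fun ℓ => ∑' j, (keyInsecurity γ ρ ℓ (a + b * ℓ) c j +
      authInsecurity ν ρ ℓ (a + b * ℓ) c j)) atTop (𝓝 0) := by
  have hb_pos : 0 < b := (div_pos two_pos hρ).trans hb
  have h_signals : Tendsto (fun ℓ => a + b * ℓ) atTop atTop :=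
    tendsto_atTop_add_const_left _ a (tendsto_id.const_mul_atTop hb_pos)
  have hn : ∀ᶠ ℓ in atTop, 0 < a + b * ℓ + c :=
    (h_signals.eventually_gt_atTop 0).mono fun ℓ hℓ => add_pos hℓ hc
  have h_rate : Tendsto (fun ℓ => ρ * (a + b * ℓ) - 2 * ℓ) atTop atTop := by
    have h_slope : 0 < ρ * b - 2 := sub_pos.mpr ((div_lt_iff₀' hρ).mp hb)
    convert tendsto_atTop_add_const_left _ (ρ * a) (tendsto_id.const_mul_atTop h_slope) using 2
    simp only [id_eq]
    ring
  have h_add := (tendsto_tsum_keyInsecurity hγ hρ hc h_rate).add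
    (tendsto_tsum_authInsecurity hν hρ hc hn tendsto_id
      (tendsto_add_mul_mul_exp_neg_mul_atTop_nhds_zero a b hν))
  rw [add_zero] at h_add
  refine h_add.congr' ?_
  filter_upwards [hn] with ℓ hℓ
  exact ((hasSum_keyInsecurity hγ hρ hc _ _).summable.tsum_add
    (hasSum_authInsecurity hν hρ hc hℓ _).summable).symm

end

/-- For any positive constants `γ, ρ, ν` and any `ε > 0` one can choose
`ℓ ≥ 0`, `n ≥ 1` and `c > 0` such that, with `nᵢ = n + c·i` and `ℓᵢ = ℓ + c·ρ·i/2`, the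
series `∑_{i=1}^∞ ( exp(−γ(ρ·nᵢ − ℓᵢ − ℓ)) + exp(−ν·ℓ_{i−1} + log nᵢ) )` of per-round
insecurities of the sequentially composed QKD rounds is summable with sum at most `ε`.
(The series over `i ≥ 1` is indexed here by `j : ℕ` via `i = j + 1`.) -/
theorem stmt_10 (γ ρ ν : ℝ) (hγ : 0 < γ) (hρ : 0 < ρ) (hν : 0 < ν) :
    ∀ ε > (0 : ℝ), ∃ ℓ n c : ℝ, 0 ≤ ℓ ∧ 1 ≤ n ∧ 0 < c ∧
      Summable (fun j : ℕ =>
        Real.exp (-γ * (ρ * (n + c * (j + 1)) - (ℓ + c * ρ * (j + 1) / 2) - ℓ)) +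
        Real.exp (-ν * (ℓ + c * ρ * j / 2) + Real.log (n + c * (j + 1)))) ∧
      (∑' j : ℕ,
        (Real.exp (-γ * (ρ * (n + c * (j + 1)) - (ℓ + c * ρ * (j + 1) / 2) - ℓ)) +
         Real.exp (-ν * (ℓ + c * ρ * j / 2) + Real.log (n + c * (j + 1))))) ≤ ε := by
  intro ε hε
  have h_slope : 2 / ρ < 3 / ρ := by gcongr; norm_num
  have h_lim := tendsto_tsum_keyInsecurity_add_authInsecurity hγ hρ hν one_pos 1 h_slope
  obtain ⟨ℓ, h_lt, hℓ⟩ := ((h_lim.eventually_lt_const hε).and (eventually_ge_atTop 0)).exists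
  have hn : 1 ≤ 1 + 3 / ρ * ℓ := le_add_of_nonneg_right (by positivity)
  exact ⟨ℓ, 1 + 3 / ρ * ℓ, 1, hℓ, hn, one_pos,
    summable_keyInsecurity_add_authInsecurity hγ hρ hν one_pos (by linarith) ℓ, h_lt.le⟩
end
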